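/- Assume condition (Cond1). Let u_τ ∈ H satisfy u_τ ≥ 0 but u_τ ≢ 0, and let u be a non-negative strong solution to problem (Incl) with initial condition u_τ at time τ. Then u is the unique solution in the class of non-negative solutions, and u(t) is positive (i.e. u(t,x) > 0 for all x ∈ (0,1)) for every t > τ. -/

import Mathlib

open MeasureTheory Set

noncomputable section

/-- Lebesgue measure restricted to the spatial interval `(0,1)`. -/
def μ01 : Measure ℝ := volume.restrict (Ioo (0:ℝ) 1)

/-- `H = L²(0,1)`. -/
abbrev Hsp : Type := Lp ℝ 2 μ01

/-- The Heaviside multifunction. -/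
def heaviside (s : ℝ) : Set ℝ :=
  if s < 0 then {-1} else if s = 0 then Icc (-1) 1 else {1}

/-- Condition (Cond1). -/
structure Cond1 (b ω : ℝ → ℝ) (b0 b1 ω0 ω1 : ℝ) : Prop where
  contb : Continuous b
  contω : Continuous ω
  b0pos : 0 < b0
  blb : ∀ t, b0 ≤ b t
  bub : ∀ t, b t ≤ b1
  ω0nonneg : 0 ≤ ω0
  ωlb : ∀ t, ω0 ≤ ω t
  ωub : ∀ t, ω t ≤ ω1

/-- `v ∈ H²(0,1) ∩ H¹₀(0,1)` with (weak) second derivative `w ∈ L²(0,1)`: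
`v` has a representative that is continuous on `[0,1]`, vanishes at the boundary,
is differentiable on `(0,1)` and whose derivative is an antiderivative of `w`. -/
def InDomainA (v w : Hsp) : Prop :=
  ∃ vt : ℝ → ℝ, ContinuousOn vt (Icc 0 1) ∧ vt 0 = 0 ∧ vt 1 = 0 ∧
    (∀ᵐ x ∂μ01, vt x = v x) ∧
    ∃ g : ℝ → ℝ,
      (∀ x ∈ Ioo (0:ℝ) 1, HasDerivAt vt (g x) x) ∧
      ∀ x ∈ Ioo (0:ℝ) 1, ∀ y ∈ Ioo (0:ℝ) 1, g x - g y = ∫ z in y..x, w z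

/-- A strong solution of the inclusion on `[τ,∞)`, with explicit data:
`r` is the `L²`-selection, `u'` the time derivative, `uxx` the second spatial derivative. -/
structure IsStrongSolutionWith (b ω : ℝ → ℝ) (τ : ℝ) (u r u' uxx : ℝ → Hsp) : Prop where
  cont : ContinuousOn u (Ici τ)
  rmem : ∀ T, τ < T → MemLp r 2 (volume.restrict (Ioo τ T))
  sel : ∀ᵐ t ∂(volume.restrict (Ioi τ)), ∀ᵐ x ∂μ01,
      ∃ h ∈ heaviside (u t x), r t x = b t * h + ω t * u t x
  dom : ∀ᵐ t ∂(volume.restrict (Ioi τ)), InDomainA (u t) (uxx t)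
  eq : ∀ᵐ t ∂(volume.restrict (Ioi τ)), u' t = r t + uxx t
  fund : ∀ T1 T2 : ℝ, τ < T1 → T1 < T2 →
      IntervalIntegrable u' volume T1 T2 ∧
      ∀ t ∈ Icc T1 T2, u t = u T1 + ∫ s in T1..t, u' s

/-- A strong solution of the inclusion on `[τ,∞)`. -/
def IsStrongSolution (b ω : ℝ → ℝ) (τ : ℝ) (u : ℝ → Hsp) : Prop :=
  ∃ r u' uxx, IsStrongSolutionWith b ω τ u r u' uxx

/-- The solution is non-negative on `[τ,∞)`. -/
def NonnegOn (u : ℝ → Hsp) (τ : ℝ) : Prop :=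
  ∀ t, τ ≤ t → ∀ᵐ x ∂μ01, 0 ≤ u t x

/-- `v` is positive: it has a continuous representative on `[0,1]`
which is strictly positive on `(0,1)`. -/
def IsPositive (v : Hsp) : Prop :=
  ∃ vt : ℝ → ℝ, ContinuousOn vt (Icc 0 1) ∧ (∀ᵐ x ∂μ01, vt x = v x) ∧
    ∀ x ∈ Ioo (0:ℝ) 1, 0 < vt x


def qD (p : ℝ) (m : ℕ) : ℝ := ∏ k ∈ Finset.range m, (1 - p ^ (k+1))

lemma qD_lower (p : ℝ) (h0 : 0 < p) (h1 : p < 1) (m : ℕ) :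
    Real.exp (-(1 / (1-p)^2)) ≤ qD p m := by
  have key : ∀ k : ℕ, Real.exp (-(p^(k+1)/(1-p))) ≤ 1 - p^(k+1) := by
    intro k
    have hx0 : 0 < p^(k+1) := by positivity
    have hx1 : p^(k+1) ≤ p := by
      calc p^(k+1) ≤ p^1 := pow_le_pow_of_le_one h0.le h1.le (by omega)
        _ = p := pow_one p
    set x := p^(k+1)
    have h1x : 0 < 1 - x := by linarith
    rw [Real.exp_neg, inv_le_comm₀ (Real.exp_pos _) h1x]
    have h2 : (1-x)⁻¹ = x/(1-x) + 1 := by field_simp; ring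
    rw [h2]
    have h3 : x/(1-x) ≤ x/(1-p) := by
      apply div_le_div_of_nonneg_left hx0.le (by linarith) (by linarith)
    linarith [Real.add_one_le_exp (x/(1-p))]
  have hsum : ∑ k ∈ Finset.range m, p^(k+1)/(1-p) ≤ 1/(1-p)^2 := by
    rw [← Finset.sum_div]
    have : ∑ k ∈ Finset.range m, p^(k+1) ≤ 1/(1-p) := by
      calc ∑ k ∈ Finset.range m, p^(k+1) ≤ ∑ k ∈ Finset.range m, p^k := by
            apply Finset.sum_le_sum; intro k _; exact pow_le_pow_of_le_one h0.le h1.le (by omega)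
        _ ≤ ∑' k, p^k := (summable_geometric_of_lt_one h0.le h1).sum_le_tsum _ (fun i _ => by positivity)
        _ = 1/(1-p) := by rw [tsum_geometric_of_lt_one h0.le h1, one_div]
    have h1p : 0 < 1 - p := by linarith
    rw [div_le_iff₀ h1p]
    calc _ ≤ _ := this
      _ = _ := by field_simp
  calc Real.exp (-(1 / (1-p)^2)) ≤ Real.exp (∑ k ∈ Finset.range m, -(p^(k+1)/(1-p))) := by
        apply Real.exp_le_exp.2; rw [Finset.sum_neg_distrib]; linarith
    _ = ∏ k ∈ Finset.range m, Real.exp (-(p^(k+1)/(1-p))) := Real.exp_sum _ _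
    _ ≤ _ := Finset.prod_le_prod (fun _ _ => (Real.exp_pos _).le) (fun k _ => key k)

lemma qD_pos (p : ℝ) (h0 : 0 < p) (h1 : p < 1) (m : ℕ) : 0 < qD p m :=
  (Real.exp_pos _).trans_le (qD_lower p h0 h1 m)

lemma qD_anti (p : ℝ) (h0 : 0 < p) (h1 : p < 1) : Antitone (qD p) := by
  apply antitone_nat_of_succ_le
  intro n
  unfold qD
  rw [Finset.prod_range_succ]
  have := qD_pos p h0 h1 n
  unfold qD at this
  have h2 : 0 < p^(n+1) := by positivity
  nlinarith

def qE (p : ℝ) (m : ℤ) : ℝ := if 0 ≤ m then (qD p m.toNat)⁻¹ else 0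

lemma qE_rec (p : ℝ) (h0 : 0 < p) (h1 : p < 1) (m : ℤ) :
    qE p (m - 1) = (1 - p^m) * qE p m := by
  unfold qE
  rcases lt_trichotomy m 0 with h | h | h
  · rw [if_neg (by omega), if_neg (by omega)]; simp
  · subst h; simp
  · rw [if_pos (by omega), if_pos (by omega)]
    obtain ⟨k, rfl⟩ : ∃ k : ℕ, m = k + 1 := ⟨(m-1).toNat, by omega⟩
    have e1 : ((k:ℤ) + 1 - 1).toNat = k := by omega
    have e2 : ((k:ℤ) + 1).toNat = k + 1 := by omega
    rw [e1, e2]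
    have := qD_pos p h0 h1 k
    have h3 := qD_pos p h0 h1 (k+1)
    have h4 : qD p (k+1) = qD p k * (1 - p^(k+1)) := by
      unfold qD; rw [Finset.prod_range_succ]
    have h5 : p ^ ((k:ℤ)+1) = p^(k+1) := by exact_mod_cast zpow_natCast p (k+1)
    rw [h5]
    rw [h4] at h3 ⊢
    have h6 : 1 - p^(k+1) ≠ 0 := by intro h; rw [h] at h3; simp at h3
    field_simp

def qA (q : ℝ) (N : ℕ) (j : ℤ) : ℝ :=
  q^(j^2) * qD (q^2) (2*N) * qE (q^2) (N - j) * qE (q^2) (N + j)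

lemma qA_rec (q : ℝ) (h0 : 0 < q) (h1 : q < 1) (N : ℕ) (j : ℤ) :
    qA q (N+1) j = (1 + q^(4*N+2)) * qA q N j + q^(2*N+1) * (qA q N (j-1) + qA q N (j+1)) := by
  have hp0 : 0 < q^2 := by positivity
  have hp1 : q^2 < 1 := by nlinarith
  unfold qA
  have hD : qD (q^2) (2*(N+1)) = qD (q^2) (2*N) * (1 - (q^2)^(2*N+1)) * (1 - (q^2)^(2*N+2)) := by
    unfold qD
    rw [show 2*(N+1) = 2*N+1+1 by ring, Finset.prod_range_succ, Finset.prod_range_succ]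
  have e1 : qE (q^2) (N - j) = (1 - (q^2)^((N:ℤ)+1-j)) * qE (q^2) (N+1-j) := by
    rw [← qE_rec _ hp0 hp1]; congr 1; ring
  have e2 : qE (q^2) (N + j) = (1 - (q^2)^((N:ℤ)+1+j)) * qE (q^2) (N+1+j) := by
    rw [← qE_rec _ hp0 hp1]; congr 1; ring
  have e3 : qE (q^2) (N - (j+1)) = (1 - (q^2)^((N:ℤ)-j)) * qE (q^2) (N-j) := by
    rw [← qE_rec _ hp0 hp1]; congr 1; ring
  have e4 : qE (q^2) (N + (j-1)) = (1 - (q^2)^((N:ℤ)+j)) * qE (q^2) (N+j) := by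
    rw [← qE_rec _ hp0 hp1]; congr 1; ring
  have e5 : qE (q^2) ((N:ℤ) - (j-1)) = qE (q^2) (N+1-j) := by congr 1; ring
  have e6 : qE (q^2) ((N:ℤ) + (j+1)) = qE (q^2) (N+1+j) := by congr 1; ring
  rw [e3, e4, e1, e2, hD, e5, e6]
  push_cast
  set X := qE (q^2) ((N:ℤ)+1-j)
  set Y := qE (q^2) ((N:ℤ)+1+j)
  set D := qD (q^2) (2*N)
  have hq : q ≠ 0 := h0.ne'
  have s1 : q^((j-1)^2) = q^(j^2) * q / (q^j)^2 := by
    rw [show (j-1)^2 = j^2 + 1 - (j + j) by ring, zpow_sub₀ hq, zpow_add₀ hq, zpow_add₀ hq, zpow_one]; ring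
  have s2 : q^((j+1)^2) = q^(j^2) * q * (q^j)^2 := by
    rw [show (j+1)^2 = j^2 + 1 + (j + j) by ring, zpow_add₀ hq, zpow_add₀ hq, zpow_add₀ hq, zpow_one]; ring
  have t0 : ∀ m : ℤ, (q^2)^m = (q^m)^2 := by
    intro m; rw [← zpow_natCast, ← zpow_natCast, ← zpow_mul, ← zpow_mul, mul_comm]
  rw [s1, s2]
  simp only [t0]
  rw [zpow_sub₀ hq, zpow_add₀ hq, zpow_add₀ hq, zpow_add₀ hq, zpow_sub₀ hq, zpow_add₀ hq, zpow_natCast, zpow_one]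
  have hB : q^j ≠ 0 := zpow_ne_zero _ hq
  set B := q^j
  set Q := q^(j^2)
  have hA : q^(2*N+1) = (q^N)^2*q := by ring
  have hA2 : q^(4*N+2) = (q^N)^4*q^2 := by ring
  have hA3 : (q^2)^(2*N+1) = (q^N)^4*q^2 := by ring
  have hA4 : (q^2)^(2*N+2) = (q^N)^4*q^4 := by ring
  rw [hA, hA2, hA3, hA4]
  set A := q^N
  field_simp
  ring

lemma hasSum_shift (f : ℤ → ℝ) (a : ℝ) (k : ℤ) (h : HasSum f a) : HasSum (fun j => f (j + k)) a :=
  ((Equiv.addRight k).hasSum_iff (f := f)).2 h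

def qP (q c : ℝ) (N : ℕ) : ℝ := ∏ k ∈ Finset.range N, (1 + 2 * q^(2*k+1) * c + q^(4*k+2))

lemma qP_hasSum (q : ℝ) (h0 : 0 < q) (h1 : q < 1) (α : ℝ) (N : ℕ) :
    HasSum (fun j : ℤ => qA q N j * Real.cos (j * α)) (qP q (Real.cos α) N) := by
  induction N with
  | zero =>
    have : ∀ j : ℤ, j ≠ 0 → qA q 0 j * Real.cos (j * α) = 0 := by
      intro j hj
      unfold qA qE
      rcases lt_or_gt_of_ne hj with h | h
      · rw [if_neg (c := 0 ≤ ((0:ℕ):ℤ) + j) (by push_cast; omega)]; simp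
      · rw [if_neg (c := 0 ≤ ((0:ℕ):ℤ) - j) (by push_cast; omega)]; simp
    convert hasSum_single (0:ℤ) this using 1
    simp [qP, qA, qE, qD]
  | succ N ih =>
    have hm : HasSum (fun j : ℤ => qA q N (j-1) * Real.cos ((j-1:ℤ) * α)) (qP q (Real.cos α) N) :=
      hasSum_shift (fun j : ℤ => qA q N j * Real.cos (j * α)) _ (-1) ih
    have hp : HasSum (fun j : ℤ => qA q N (j+1) * Real.cos ((j+1:ℤ) * α)) (qP q (Real.cos α) N) :=
      hasSum_shift (fun j : ℤ => qA q N j * Real.cos (j * α)) _ 1 ih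
    -- sums with shifted cos
    have ihs : HasSum (fun j : ℤ => qA q N j * Real.sin (j * α)) 0 := by
      have hodd : ∀ j : ℤ, qA q N (-j) * Real.sin ((-j:ℤ) * α) = - (qA q N j * Real.sin (j*α)) := by
        intro j
        have : qA q N (-j) = qA q N j := by
          unfold qA; rw [neg_sq, sub_neg_eq_add, ← sub_eq_add_neg]; ring
        rw [this]; push_cast; rw [neg_mul, Real.sin_neg]; ring
      have hs : Summable (fun j : ℤ => qA q N j * Real.sin (j * α)) := by
        apply summable_of_hasFiniteSupport
        apply (Set.finite_Icc (-(N:ℤ)) N).subset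
        intro j hj
        by_contra hcon
        apply hj
        show qA q N j * Real.sin (j * α) = 0
        simp only [Set.mem_Icc, not_and_or, not_le] at hcon
        unfold qA qE
        rcases hcon with h | h
        · rw [if_neg (c := 0 ≤ (N:ℤ) + j) (by omega)]; simp
        · rw [if_neg (c := 0 ≤ (N:ℤ) - j) (by omega)]; simp
      have h2 := ((Equiv.neg ℤ).hasSum_iff (f := fun j : ℤ => qA q N j * Real.sin (j * α))).2 hs.hasSum
      have h3 : HasSum (fun j : ℤ => -(qA q N j * Real.sin (j*α))) (∑' j : ℤ, qA q N j * Real.sin (j * α)) := by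
        convert h2 using 2 with j
        exact (hodd j).symm
      have h4 := h3.unique hs.hasSum.neg
      have : ∑' j : ℤ, qA q N j * Real.sin (j * α) = 0 := by linarith
      rw [← this]; exact hs.hasSum
    have hms : HasSum (fun j : ℤ => qA q N (j-1) * Real.sin ((j-1:ℤ) * α)) 0 :=
      hasSum_shift (fun j : ℤ => qA q N j * Real.sin (j * α)) _ (-1) ihs
    have hps : HasSum (fun j : ℤ => qA q N (j+1) * Real.sin ((j+1:ℤ) * α)) 0 :=
      hasSum_shift (fun j : ℤ => qA q N j * Real.sin (j * α)) _ 1 ihs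
    have tot := ((ih.mul_left (1 + q^(4*N+2))).add
      ((((hm.mul_left (Real.cos α)).sub (hms.mul_left (Real.sin α))).add
       ((hp.mul_left (Real.cos α)).add (hps.mul_left (Real.sin α)))).mul_left (q^(2*N+1))))
    have hfun : (fun j : ℤ => qA q (N+1) j * Real.cos (j * α)) = (fun b : ℤ =>
      (1 + q ^ (4 * N + 2)) * (qA q N b * Real.cos (b * α)) +
        q ^ (2 * N + 1) *
          (Real.cos α * (qA q N (b - 1) * Real.cos ((b - 1 : ℤ) * α)) -
              Real.sin α * (qA q N (b - 1) * Real.sin ((b - 1 : ℤ) * α)) +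
            (Real.cos α * (qA q N (b + 1) * Real.cos ((b + 1 : ℤ) * α)) +
              Real.sin α * (qA q N (b + 1) * Real.sin ((b + 1 : ℤ) * α))))) := by
      ext j
      rw [qA_rec q h0 h1]
      have c1 : Real.cos (j*α) = Real.cos α * Real.cos ((j-1:ℤ)*α) - Real.sin α * Real.sin ((j-1:ℤ)*α) := by
        rw [← Real.cos_add]; congr 1; push_cast; ring
      have c2 : Real.cos (j*α) = Real.cos α * Real.cos ((j+1:ℤ)*α) + Real.sin α * Real.sin ((j+1:ℤ)*α) := by
        rw [← Real.cos_sub, ← Real.cos_neg]; congr 1; push_cast; ring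
      have : ((1 + q ^ (4 * N + 2)) * qA q N j + q ^ (2 * N + 1) * (qA q N (j - 1) + qA q N (j + 1))) * Real.cos (j * α)
        = (1 + q ^ (4 * N + 2)) * (qA q N j * Real.cos (j*α)) + q ^ (2 * N + 1) * (qA q N (j - 1) * Real.cos (j*α) + qA q N (j + 1) * Real.cos (j * α)) := by ring
      rw [this]
      congr 2
      congr 1
      · rw [c1]; ring
      · rw [c2]; ring
    have hval : qP q (Real.cos α) (N+1) = ((1 + q ^ (4 * N + 2)) * qP q (Real.cos α) N +
      q ^ (2 * N + 1) *
        (Real.cos α * qP q (Real.cos α) N - Real.sin α * 0 + (Real.cos α * qP q (Real.cos α) N + Real.sin α * 0))) := by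
      unfold qP; rw [Finset.prod_range_succ]; ring
    rw [hfun, hval]
    exact tot

lemma qP_gap (q : ℝ) (h0 : 0 < q) (h1 : q < 1) (a b : ℝ) (hb : -1 ≤ b) (hab : b < a) (N : ℕ) :
    2 * q * (a - b) * Real.exp (-(1 / (1-q)^2))^2 ≤ qP q a (N+1) - qP q b (N+1) := by
  have hF : ∀ c : ℝ, qP q c (N+1) = (∏ k ∈ Finset.range N, (1 + 2 * q^(2*(k+1)+1) * c + q^(4*(k+1)+2))) * (1 + 2 * q * c + q^2) := by
    intro c; unfold qP; rw [Finset.prod_range_succ']; simp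
  rw [hF, hF]
  have hfac : ∀ s : ℝ, 0 < s → s < 1 → (1-s)^2 ≤ 1 + 2*s*b + s^2 := by
    intro s hs hs1; nlinarith
  have hlow : Real.exp (-(1 / (1-q)^2))^2 ≤ ∏ k ∈ Finset.range N, (1 + 2 * q^(2*(k+1)+1) * b + q^(4*(k+1)+2)) := by
    calc Real.exp (-(1 / (1-q)^2))^2 ≤ (qD q N)^2 := by
          gcongr; exact qD_lower q h0 h1 N
      _ = ∏ k ∈ Finset.range N, (1 - q^(k+1))^2 := by unfold qD; rw [Finset.prod_pow]
      _ ≤ _ := by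
        apply Finset.prod_le_prod
        · intro k _; positivity
        · intro k _
          have hs : 0 < q^(2*(k+1)+1) := by positivity
          have hs1 : q^(2*(k+1)+1) < 1 := pow_lt_one₀ h0.le h1 (by omega)
          have hs2 : q^(2*(k+1)+1) ≤ q^(k+1) := pow_le_pow_of_le_one h0.le h1.le (by omega)
          have hs3 : q^(k+1) < 1 := pow_lt_one₀ h0.le h1 (by omega)
          have := hfac _ hs hs1
          have e : q^(4*(k+1)+2) = (q^(2*(k+1)+1))^2 := by rw [← pow_mul]; congr 1; ring
          rw [e]
          refine le_trans ?_ this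
          gcongr
  have hmono : ∏ k ∈ Finset.range N, (1 + 2 * q^(2*(k+1)+1) * b + q^(4*(k+1)+2)) ≤
      ∏ k ∈ Finset.range N, (1 + 2 * q^(2*(k+1)+1) * a + q^(4*(k+1)+2)) := by
    apply Finset.prod_le_prod
    · intro k _
      have hs : 0 < q^(2*(k+1)+1) := by positivity
      have hs1 : q^(2*(k+1)+1) < 1 := pow_lt_one₀ h0.le h1 (by omega)
      have := hfac _ hs hs1
      have e : q^(4*(k+1)+2) = (q^(2*(k+1)+1))^2 := by rw [← pow_mul]; congr 1; ring
      rw [e]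
      exact le_trans (by positivity) this
    · intro k _
      gcongr
  set Pa := ∏ k ∈ Finset.range N, (1 + 2 * q^(2*(k+1)+1) * a + q^(4*(k+1)+2))
  set Pb := ∏ k ∈ Finset.range N, (1 + 2 * q^(2*(k+1)+1) * b + q^(4*(k+1)+2))
  have hpos : 0 ≤ 1 + 2*q*a + q^2 := by nlinarith [hfac q h0 h1]
  have h2 : 0 ≤ 2 * q * (a-b) := by have : 0 < a - b := by linarith
                                    positivity
  nlinarith [mul_le_mul_of_nonneg_right hmono hpos, mul_le_mul_of_nonneg_left hlow h2]

lemma summable_qsq (q : ℝ) (h0 : 0 < q) (h1 : q < 1) : Summable (fun j : ℤ => q^(j^2)) := by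
  have h : Summable (fun n : ℕ => q^n) := summable_geometric_of_lt_one h0.le h1
  have hb : Summable (fun n : ℕ => q^(((n:ℤ))^2)) := by
    refine Summable.of_nonneg_of_le (fun n => (zpow_pos h0 _).le) (fun n => ?_) h
    have e : ((n:ℤ))^2 = ((n^2 : ℕ):ℤ) := by push_cast; ring
    rw [e, zpow_natCast]
    exact pow_le_pow_of_le_one h0.le h1.le (Nat.le_self_pow (by norm_num) n)
  refine Summable.of_nat_of_neg (f := fun j : ℤ => q^(j^2)) hb ?_
  refine hb.congr fun n => ?_
  rw [neg_sq]

lemma exp_zpow' (x : ℝ) (m : ℤ) : Real.exp x ^ m = Real.exp (m * x) := by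
  rw [← Real.rpow_intCast, ← Real.exp_mul, mul_comm]

lemma theta_lt (q : ℝ) (h0 : 0 < q) (h1 : q < 1) (α β : ℝ) (h : Real.cos β < Real.cos α) :
    ∑' j : ℤ, q^(j^2) * Real.cos (j * β) < ∑' j : ℤ, q^(j^2) * Real.cos (j * α) := by
  have hp0 : 0 < q^2 := by positivity
  have hp1 : q^2 < 1 := by nlinarith
  obtain ⟨L, hL⟩ : ∃ L, Filter.Tendsto (qD (q^2)) Filter.atTop (nhds L) :=
    ⟨_, tendsto_atTop_ciInf (qD_anti _ hp0 hp1) ⟨0, by rintro _ ⟨m, rfl⟩; exact (qD_pos _ hp0 hp1 m).le⟩⟩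
  set c := Real.exp (-(1 / (1-q^2)^2)) with hc
  have hcpos : 0 < c := Real.exp_pos _
  have hLc : c ≤ L := ge_of_tendsto' hL (qD_lower _ hp0 hp1)
  have hLpos : 0 < L := hcpos.trans_le hLc
  -- normalised
  let nf : ℕ → ℝ := fun N => (qD (q^2) N)^2 / qD (q^2) (2*N)
  have hE : ∀ m : ℤ, 0 ≤ qE (q^2) m ∧ qE (q^2) m ≤ c⁻¹ := by
    intro m; unfold qE; split_ifs
    · exact ⟨inv_nonneg.2 (qD_pos _ hp0 hp1 _).le, inv_anti₀ hcpos (qD_lower _ hp0 hp1 _)⟩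
    · exact ⟨le_rfl, (inv_pos.2 hcpos).le⟩
  have hElim : ∀ g : ℕ → ℤ, Filter.Tendsto g Filter.atTop Filter.atTop →
      Filter.Tendsto (fun N => qE (q^2) (g N)) Filter.atTop (nhds L⁻¹) := by
    intro g hg
    have h1 : Filter.Tendsto (fun N => (qD (q^2) (g N).toNat)⁻¹) Filter.atTop (nhds L⁻¹) := by
      apply Filter.Tendsto.inv₀ _ hLpos.ne'
      apply hL.comp
      apply Filter.tendsto_atTop_atTop.2
      intro b
      obtain ⟨i, hi⟩ := (Filter.tendsto_atTop_atTop.1 hg) b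
      exact ⟨i, fun a ha => by have := hi a ha; omega⟩
    apply h1.congr'
    filter_upwards [hg.eventually_ge_atTop 0] with N hN
    unfold qE; rw [if_pos hN]
  have hlim : ∀ γ : ℝ, Filter.Tendsto (fun N => nf N * qP q (Real.cos γ) N) Filter.atTop
      (nhds (∑' j : ℤ, q^(j^2) * Real.cos (j * γ))) := by
    intro γ
    have e : ∀ N, nf N * qP q (Real.cos γ) N = ∑' j : ℤ, (qD (q^2) N)^2 * (q^(j^2) * qE (q^2) (N-j) * qE (q^2) (N+j)) * Real.cos (j*γ) := by
      intro N
      rw [← (qP_hasSum q h0 h1 γ N).tsum_eq, ← tsum_mul_left]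
      congr 1; ext j
      have := (qD_pos _ hp0 hp1 (2*N)).ne'
      simp only [nf, qA]; field_simp
    simp_rw [e]
    apply tendsto_tsum_of_dominated_convergence (bound := fun j : ℤ => q^(j^2) * (c⁻¹ * c⁻¹))
    · exact (summable_qsq q h0 h1).mul_right _
    · intro j
      have t1 : Filter.Tendsto (fun N : ℕ => (N:ℤ) - j) Filter.atTop Filter.atTop :=
        Filter.tendsto_atTop_add_const_right _ (-j) tendsto_natCast_atTop_atTop
      have t2 : Filter.Tendsto (fun N : ℕ => (N:ℤ) + j) Filter.atTop Filter.atTop :=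
        Filter.tendsto_atTop_add_const_right _ j tendsto_natCast_atTop_atTop
      have := (((hL.pow 2).mul (((hElim _ t1).const_mul (q^(j^2))).mul (hElim _ t2))).mul_const (Real.cos (j*γ)))
      convert this using 2
      field_simp
    · filter_upwards with N j
      rw [norm_mul, norm_mul, norm_mul, norm_mul, Real.norm_of_nonneg (hE _).1, Real.norm_of_nonneg (hE _).1, Real.norm_of_nonneg (by positivity : 0 ≤ q^(j^2)), norm_pow, Real.norm_of_nonneg (qD_pos _ hp0 hp1 N).le]
      have hD1 : qD (q^2) N ≤ 1 := by
        have := qD_anti _ hp0 hp1 (Nat.zero_le N)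
        simpa [qD] using this
      have hD0 := qD_pos _ hp0 hp1 N
      have hcos : ‖Real.cos (j*γ)‖ ≤ 1 := Real.abs_cos_le_one _
      have hEE : qE (q^2) (N-j) * qE (q^2) (N+j) ≤ c⁻¹ * c⁻¹ := by
        apply mul_le_mul (hE _).2 (hE _).2 (hE _).1 (by positivity)
      have hEE0 : 0 ≤ qE (q^2) (N-j) * qE (q^2) (N+j) := mul_nonneg (hE _).1 (hE _).1
      have hq : 0 ≤ q^(j^2) := by positivity
      have hD2 : (qD (q^2) N)^2 ≤ 1 := pow_le_one₀ hD0.le hD1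
      calc _ ≤ 1 * (q^(j^2) * (qE (q^2) (N-j) * qE (q^2) (N+j))) * 1 := by
            rw [mul_assoc (q^(j^2))]
            gcongr
        _ ≤ _ := by rw [one_mul, mul_one]; gcongr
  have hd := ((hlim α).sub (hlim β)).comp (Filter.tendsto_add_atTop_nat 1)
  have hge : c * (2 * q * (Real.cos α - Real.cos β) * Real.exp (-(1 / (1-q)^2))^2) ≤
      ∑' j : ℤ, q^(j^2) * Real.cos (j * α) - ∑' j : ℤ, q^(j^2) * Real.cos (j * β) := by
    apply ge_of_tendsto' hd
    intro N
    simp only [Function.comp]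
    rw [← mul_sub]
    have hg := qP_gap q h0 h1 _ _ (Real.neg_one_le_cos β) h N
    have hc0 : 0 < Real.cos α - Real.cos β := by linarith
    apply mul_le_mul _ hg (by positivity)
    · have := qD_pos _ hp0 hp1 (N+1); have := qD_pos _ hp0 hp1 (2*(N+1)); positivity
    · have d1 := qD_pos _ hp0 hp1 (N+1)
      have d2 := qD_pos _ hp0 hp1 (2*(N+1))
      have d3 := qD_anti _ hp0 hp1 (show N+1 ≤ 2*(N+1) by omega)
      simp only [nf]
      rw [le_div_iff₀ d2]
      have d4 := qD_lower _ hp0 hp1 (N+1)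
      rw [sq (qD (q^2) (N+1))]
      apply mul_le_mul d4 d3 d2.le d1.le
  have hc0 : 0 < Real.cos α - Real.cos β := by linarith
  have : 0 < c * (2 * q * (Real.cos α - Real.cos β) * Real.exp (-(1 / (1-q)^2))^2) := by positivity
  linarith

def lam (n : ℤ) : ℝ := (n * Real.pi)^2
def Sn (n : ℤ) (x : ℝ) : ℝ := Real.sin (n * Real.pi * x)
def Ker (δ x y : ℝ) : ℝ := ∑' n : ℤ, Real.exp (-lam n * δ) * Sn n x * Sn n y

lemma summable_exp_lam (δ : ℝ) (hδ : 0 < δ) : Summable (fun n : ℤ => Real.exp (-lam n * δ)) := by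
  have := summable_qsq (Real.exp (-(Real.pi^2 * δ))) (Real.exp_pos _) (by rw [Real.exp_lt_one_iff]; have := Real.pi_pos; simp; positivity)
  convert this using 2 with n
  rw [exp_zpow']; congr 1; unfold lam; push_cast; ring

lemma Ker_pos (δ x y : ℝ) (hδ : 0 < δ) (hx : x ∈ Ioo (0:ℝ) 1) (hy : y ∈ Ioo (0:ℝ) 1) :
    0 < Ker δ x y := by
  have hpi := Real.pi_pos
  set q := Real.exp (-(Real.pi^2 * δ)) with hq
  have hq0 : 0 < q := Real.exp_pos _
  have hq1 : q < 1 := by rw [hq, Real.exp_lt_one_iff]; simp; positivity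
  have hsx : 0 < Real.sin (Real.pi * x) := Real.sin_pos_of_pos_of_lt_pi (by have := hx.1; positivity) (by nlinarith [hx.2])
  have hsy : 0 < Real.sin (Real.pi * y) := Real.sin_pos_of_pos_of_lt_pi (by have := hy.1; positivity) (by nlinarith [hy.2])
  have hcos : Real.cos (Real.pi * x + Real.pi * y) < Real.cos (Real.pi * x - Real.pi * y) := by
    rw [Real.cos_add, Real.cos_sub]; nlinarith [mul_pos hsx hsy]
  have hth := theta_lt q hq0 hq1 _ _ hcos
  have hs : ∀ γ : ℝ, Summable (fun j : ℤ => q^(j^2) * Real.cos (j * γ)) := by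
    intro γ
    apply Summable.of_norm_bounded (summable_qsq q hq0 hq1)
    intro j
    rw [norm_mul, Real.norm_of_nonneg (by positivity : 0 ≤ q^(j^2))]
    exact mul_le_of_le_one_right (by positivity) (Real.abs_cos_le_one _)
  have : 2 * Ker δ x y = ∑' j : ℤ, q^(j^2) * Real.cos (j * (Real.pi * x - Real.pi * y)) - ∑' j : ℤ, q^(j^2) * Real.cos (j * (Real.pi * x + Real.pi * y)) := by
    rw [← (hs _).tsum_sub (hs _), Ker, ← tsum_mul_left]
    congr 1; ext n
    have e : Real.exp (-lam n * δ) = q^(n^2) := by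
      rw [hq, exp_zpow']; congr 1; unfold lam; push_cast; ring
    rw [e]
    have e1 : (n:ℝ) * (Real.pi * x - Real.pi * y) = n * Real.pi * x - n * Real.pi * y := by ring
    have e2 : (n:ℝ) * (Real.pi * x + Real.pi * y) = n * Real.pi * x + n * Real.pi * y := by ring
    rw [e1, e2, Real.cos_add, Real.cos_sub]; unfold Sn; ring
  linarith


instance : IsFiniteMeasure μ01 := by unfold μ01; infer_instance

lemma Sn_cont (n : ℤ) : Continuous (Sn n) := by unfold Sn; fun_prop

lemma Sn_abs (n : ℤ) (x : ℝ) : |Sn n x| ≤ 1 := Real.abs_sin_le_one _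

lemma Sn_memLp (n : ℤ) : MemLp (Sn n) 2 μ01 :=
  MemLp.of_bound (Sn_cont n).aestronglyMeasurable 1 (Filter.Eventually.of_forall fun x => Sn_abs n x)

def en (n : ℤ) : Hsp := (Sn_memLp n).toLp

lemma hsp_integrable (v : Hsp) : Integrable (fun x => v x) μ01 :=
  (Lp.memLp v).integrable (by norm_num)

lemma μ01_univ : μ01 univ = 1 := by simp [μ01]

instance : IsProbabilityMeasure μ01 := ⟨μ01_univ⟩

lemma en_norm (n : ℤ) : ‖en n‖ ≤ 1 := by
  have h := Lp.norm_le_of_ae_bound (f := en n) (C := 1) (μ := μ01) (p := 2) (by norm_num)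
    (by filter_upwards [(Sn_memLp n).coeFn_toLp] with x hx
        unfold en; rw [hx]; exact Sn_abs n x)
  simpa [measureUnivNNReal, μ01_univ] using h

def cn (n : ℤ) : Hsp →L[ℝ] ℝ := innerSL ℝ (en n)

lemma cn_eq (n : ℤ) (v : Hsp) : cn n v = ∫ x, Sn n x * v x ∂μ01 := by
  unfold cn
  rw [innerSL_apply_apply, L2.inner_def]
  apply integral_congr_ae
  filter_upwards [(Sn_memLp n).coeFn_toLp] with x hx
  unfold en
  rw [hx]; simp [mul_comm]

lemma cn_abs (n : ℤ) (v : Hsp) : |cn n v| ≤ ‖v‖ := by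
  unfold cn
  rw [innerSL_apply_apply]
  calc |inner ℝ (en n) v| ≤ ‖en n‖ * ‖v‖ := abs_real_inner_le_norm _ _
    _ ≤ 1 * ‖v‖ := by gcongr; exact en_norm n
    _ = _ := one_mul _

lemma complete_sin (v : Hsp) (h : ∀ n, cn n v = 0) : v = 0 := by
  let g : ℝ → ℝ := (Ioo (0:ℝ) 1).indicator (fun x => v x)
  have hg : MemLp g 2 volume := by
    rw [memLp_indicator_iff_restrict measurableSet_Ioo]
    exact Lp.memLp v
  have hgi : Integrable g volume := by
    rw [integrable_indicator_iff measurableSet_Ioo]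
    exact hsp_integrable v
  have hgn : MemLp (fun x => g (-x)) 2 volume :=
    hg.comp_measurePreserving (Measure.measurePreserving_neg volume)
  let f : ℝ → ℂ := fun x => ((g x - g (-x) : ℝ) : ℂ)
  have hf : MemLp f 2 volume := (hg.sub hgn).ofReal
  have hab : (-1:ℝ) < 1 := by norm_num
  have hP := hasSum_sq_fourierCoeffOn hab (hf.restrict (Ioc (-1) 1))
  have hcoef : ∀ n, fourierCoeffOn hab f n = 0 := by
    intro n
    rw [fourierCoeffOn_eq_integral]
    have hk : ∀ x : ℝ, (fourier (-n) (x : AddCircle ((1:ℝ) - -1))) = (Real.cos (n * Real.pi * x) : ℂ) - Complex.I * (Sn n x : ℂ) := by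
      intro x
      rw [fourier_coe_apply]
      have : (2 * (Real.pi:ℂ) * Complex.I * ((-n : ℤ):ℂ) * (x:ℂ) / (((1:ℝ) - -1 : ℝ):ℂ)) = ((-(n * Real.pi * x) : ℝ):ℂ) * Complex.I := by
        push_cast; ring
      rw [this, Complex.exp_mul_I, ← Complex.ofReal_cos, ← Complex.ofReal_sin, Real.cos_neg, Real.sin_neg]
      unfold Sn; push_cast; ring
    have hint : ∫ x in (-1:ℝ)..1, (fourier (-n) (x : AddCircle ((1:ℝ) - -1))) • f x = 0 := by
      rw [intervalIntegral.integral_of_le hab.le, ← integral_indicator measurableSet_Ioc]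
      have e0 : (Ioc (-1:ℝ) 1).indicator (fun x : ℝ => (fourier (-n) (x : AddCircle ((1:ℝ) - -1))) • f x)
          = fun x => ((Real.cos (n * Real.pi * x) : ℂ) - Complex.I * (Sn n x : ℂ)) * ((g x - g (-x) : ℝ) : ℂ) := by
        ext x
        by_cases hx : x ∈ Ioc (-1:ℝ) 1
        · rw [indicator_of_mem hx, hk, smul_eq_mul]
        · rw [indicator_of_notMem hx]
          have h1 : g x = 0 := indicator_of_notMem (fun hh => hx ⟨by linarith [hh.1], hh.2.le⟩) _
          have h2 : g (-x) = 0 := indicator_of_notMem (fun hh => hx ⟨by linarith [hh.2], by linarith [hh.1]⟩) _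
          rw [h1, h2]; simp
      rw [e0]
      have i1 : Integrable (fun x => Real.cos (n * Real.pi * x) * (g x - g (-x))) volume := by
        apply Integrable.bdd_mul (c := 1) (hgi.sub hgi.comp_neg)
        · exact (by fun_prop : Continuous fun x:ℝ => Real.cos (n * Real.pi * x)).aestronglyMeasurable
        · exact Filter.Eventually.of_forall fun x => Real.abs_cos_le_one _
      have i2a : Integrable (fun x => Sn n x * g x) volume := by
        apply Integrable.bdd_mul (c := 1) hgi (Sn_cont n).aestronglyMeasurable
        exact Filter.Eventually.of_forall fun x => Sn_abs n x
      have i2b : Integrable (fun x => Sn n x * g (-x)) volume := by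
        apply Integrable.bdd_mul (c := 1) hgi.comp_neg (Sn_cont n).aestronglyMeasurable
        exact Filter.Eventually.of_forall fun x => Sn_abs n x
      have v1 : ∫ x, Real.cos (n * Real.pi * x) * (g x - g (-x)) = 0 := by
        have := integral_neg_eq_self (fun x => Real.cos (n * Real.pi * x) * (g x - g (-x))) volume
        have h2 : (∫ x, Real.cos (n * Real.pi * (-x)) * (g (-x) - g (- -x))) = -∫ x, Real.cos (n * Real.pi * x) * (g x - g (-x)) := by
          rw [← integral_neg]; congr 1; ext x; rw [mul_neg, Real.cos_neg, neg_neg]; ring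
        linarith
      have va : ∫ x, Sn n x * g x = 0 := by
        have h5 := h n
        rw [cn_eq] at h5
        have this : ∫ x in Ioo (0:ℝ) 1, Sn n x * v x = 0 := h5
        rw [← integral_indicator measurableSet_Ioo] at this
        rw [← this]; congr 1; ext x
        by_cases hx : x ∈ Ioo (0:ℝ) 1
        · simp [g, hx]
        · simp [g, hx]
      have vb : ∫ x, Sn n x * g (-x) = 0 := by
        have := integral_neg_eq_self (fun x => Sn n x * g (-x)) volume
        rw [← this]
        have h2 : (∫ x, Sn n (-x) * g (- -x)) = -∫ x, Sn n x * g x := by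
          rw [← integral_neg]; congr 1; ext x; unfold Sn; rw [mul_neg, Real.sin_neg, neg_neg]; ring
        rw [h2, va, neg_zero]
      have i2 : Integrable (fun x => Sn n x * (g x - g (-x))) volume := by
        simp_rw [mul_sub]; exact i2a.sub i2b
      have v2 : ∫ x, Sn n x * (g x - g (-x)) = 0 := by
        simp_rw [mul_sub]; rw [integral_sub i2a i2b, va, vb, sub_zero]
      have e1 : (fun x => ((Real.cos (n * Real.pi * x) : ℂ) - Complex.I * (Sn n x : ℂ)) * ((g x - g (-x) : ℝ) : ℂ))
        = fun x => ((Real.cos (n * Real.pi * x) * (g x - g (-x)) : ℝ) : ℂ) - Complex.I * ((Sn n x * (g x - g (-x)) : ℝ) : ℂ) := by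
        ext x; push_cast; ring
      rw [e1, integral_sub i1.ofReal (i2.ofReal.const_mul _), integral_const_mul]
      have c1 := @integral_ofReal ℝ _ volume ℂ _ (fun x => Real.cos (n * Real.pi * x) * (g x - g (-x)))
      have c2 := @integral_ofReal ℝ _ volume ℂ _ (fun x => Sn n x * (g x - g (-x)))
      simp only [Complex.coe_algebraMap] at c1 c2
      rw [c1, c2, v1, v2]; simp
    rw [hint]; simp
  have hz : ∫ x in (-1:ℝ)..1, ‖f x‖^2 = 0 := by
    have h1 : HasSum (fun i : ℤ => ‖fourierCoeffOn hab f i‖^2) 0 := by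
      simp only [hcoef]; simp [hasSum_zero]
    have := hP.unique h1
    simpa using this
  rw [intervalIntegral.integral_of_le hab.le, integral_eq_zero_iff_of_nonneg (fun x => by positivity)
    (by have := (hf.restrict (Ioc (-1) 1)).integrable_norm_pow (by norm_num); simpa using this)] at hz
  have hz2 : ∀ᵐ x ∂μ01, ‖f x‖^2 = 0 := by
    unfold μ01
    exact ae_restrict_of_ae_restrict_of_subset (s := Ioo (0:ℝ) 1) (t := Ioc (-1:ℝ) 1)
      (fun x hx => ⟨by linarith [hx.1], hx.2.le⟩) hz
  apply Lp.ext
  have hm : ∀ᵐ x ∂μ01, x ∈ Ioo (0:ℝ) 1 := ae_restrict_mem measurableSet_Ioo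
  filter_upwards [hz2, hm, Lp.coeFn_zero ℝ 2 μ01] with x hx hxm h0
  rw [h0]
  have h1 : g x = v x := indicator_of_mem hxm _
  have h2 : g (-x) = 0 := indicator_of_notMem (fun hh => by linarith [hh.1, hxm.1]) _
  simpa [f, h1, h2] using hx

lemma int_cos (k : ℤ) : ∫ x in (0:ℝ)..1, Real.cos (k * Real.pi * x) = if k = 0 then 1 else 0 := by
  split_ifs with h
  · subst h; simp
  · have hk : (k:ℝ) * Real.pi ≠ 0 := mul_ne_zero (by exact_mod_cast h) Real.pi_ne_zero
    rw [intervalIntegral.integral_comp_mul_left (fun x => Real.cos x) hk]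
    simp [Real.sin_int_mul_pi]

lemma int_SnSn (m n : ℤ) : ∫ x, Sn n x * Sn m x ∂μ01 =
    ((if m = n then 1 else 0) - (if m = -n then 1 else 0)) / 2 := by
  have e : ∀ x, Sn n x * Sn m x = (Real.cos ((m - n : ℤ) * Real.pi * x) - Real.cos ((m + n : ℤ) * Real.pi * x)) / 2 := by
    intro x
    have e1 : ((m-n:ℤ):ℝ) * Real.pi * x = m * Real.pi * x - n * Real.pi * x := by push_cast; ring
    have e2 : ((m+n:ℤ):ℝ) * Real.pi * x = m * Real.pi * x + n * Real.pi * x := by push_cast; ring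
    rw [e1, e2, Real.cos_sub, Real.cos_add]; unfold Sn; ring
  simp_rw [e]
  unfold μ01
  rw [← integral_Ioc_eq_integral_Ioo, ← intervalIntegral.integral_of_le zero_le_one,
    intervalIntegral.integral_div, intervalIntegral.integral_sub, int_cos, int_cos]
  · congr 2
    · simp [sub_eq_zero]
    · simp [add_eq_zero_iff_eq_neg]
  · exact (by fun_prop : Continuous _).intervalIntegrable _ _
  · exact (by fun_prop : Continuous _).intervalIntegrable _ _

lemma cn_neg (n : ℤ) (v : Hsp) : cn (-n) v = - cn n v := by
  rw [cn_eq, cn_eq, ← integral_neg]; congr 1; ext x; unfold Sn; push_cast; simp [Real.sin_neg]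

/-- absolutely convergent sine series represent the function -/
lemma sine_series (v : Hsp) (hs : Summable (fun n => |cn n v|)) :
    Continuous (fun x => ∑' n, cn n v * Sn n x) ∧ ∀ᵐ x ∂μ01, ∑' n, cn n v * Sn n x = v x := by
  have hb : ∀ n x, ‖cn n v * Sn n x‖ ≤ |cn n v| := by
    intro n x; rw [norm_mul]; exact mul_le_of_le_one_right (abs_nonneg _) (Sn_abs n x)
  have hc : Continuous (fun x => ∑' n, cn n v * Sn n x) :=
    continuous_tsum (fun n => (Sn_cont n).const_mul (cn n v)) hs hb
  refine ⟨hc, ?_⟩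
  have hm : MemLp (fun x => ∑' n, cn n v * Sn n x) 2 μ01 := by
    refine MemLp.of_bound hc.aestronglyMeasurable (∑' n, |cn n v|) (Filter.Eventually.of_forall fun x => ?_)
    exact tsum_of_norm_bounded hs.hasSum (fun n => hb n x)
  obtain ⟨V, hV⟩ : ∃ V : Hsp, ∀ᵐ x ∂μ01, V x = ∑' n, cn n v * Sn n x := ⟨hm.toLp _, hm.coeFn_toLp⟩
  have hz : V - v = 0 := by
    apply complete_sin
    intro n
    rw [map_sub, sub_eq_zero, cn_eq]
    have e1 : ∫ x, Sn n x * V x ∂μ01 = ∫ x, ∑' m, Sn n x * (cn m v * Sn m x) ∂μ01 := by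
      apply integral_congr_ae
      filter_upwards [hV] with x hx
      rw [hx, tsum_mul_left]
    have hb2 : ∀ m x, ‖Sn n x * (cn m v * Sn m x)‖ ≤ |cn m v| := by
      intro m x; rw [norm_mul]
      exact (mul_le_of_le_one_left (norm_nonneg _) (Sn_abs n x)).trans (hb m x)
    have hi : ∀ m, Integrable (fun x => Sn n x * (cn m v * Sn m x)) μ01 := by
      intro m
      apply Integrable.of_bound ((Sn_cont n).mul ((Sn_cont m).const_mul _)).aestronglyMeasurable (|cn m v|)
      exact Filter.Eventually.of_forall (hb2 m)
    have hsum := hasSum_integral_of_summable_integral_norm hi (by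
      refine Summable.of_nonneg_of_le (fun m => integral_nonneg fun x => norm_nonneg _) (fun m => ?_) hs
      calc ∫ x, ‖Sn n x * (cn m v * Sn m x)‖ ∂μ01 ≤ ∫ x, |cn m v| ∂μ01 :=
            integral_mono (hi m).norm (integrable_const _) (hb2 m)
        _ = |cn m v| := by simp)
    rw [e1]
    have e2 : ∀ m, ∫ x, Sn n x * (cn m v * Sn m x) ∂μ01 = (if m = n then cn m v/2 else 0) - (if m = -n then cn m v/2 else 0) := by
      intro m
      have : ∀ x, Sn n x * (cn m v * Sn m x) = cn m v * (Sn n x * Sn m x) := fun x => by ring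
      simp_rw [this]
      rw [integral_const_mul, int_SnSn]; split_ifs <;> ring
    simp_rw [e2] at hsum
    have h3 := (hasSum_ite_eq n (cn n v/2)).sub (hasSum_ite_eq (-n) (cn (-n) v/2))
    have h4 := hsum.unique (h3.congr_fun ?_)
    · rw [h4, cn_neg]; ring
    · intro m
      congr 1
      · split_ifs with h <;> simp [h]
      · split_ifs with h <;> simp [h]
  have hv : V = v := sub_eq_zero.1 hz
  filter_upwards [hV] with x hx
  rw [← hx, hv]


/-- integration by parts for an antiderivative against a `C¹` function -/
lemma ibp (F Y g g' : ℝ → ℝ) (Y0 a b : ℝ) (hab : a ≤ b) (hF : IntervalIntegrable F volume a b)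
    (hY : ∀ t ∈ Icc a b, Y t = Y0 + ∫ s in a..t, F s)
    (hg : ∀ t, HasDerivAt g (g' t) t) (hg' : Continuous g') :
    ∫ t in a..b, (F t * g t + Y t * g' t) = Y b * g b - Y a * g a := by
  have hdg : deriv g = g' := funext fun t => (hg t).deriv
  have hgC : ContDiff ℝ 1 g := contDiff_one_iff_deriv.2 ⟨fun t => (hg t).differentiableAt, by rw [hdg]; exact hg'⟩
  have hgAC : AbsolutelyContinuousOnInterval g a b := hgC.contDiffOn.absolutelyContinuousOnInterval
  have hZ1 : AbsolutelyContinuousOnInterval (fun t => ∫ s in a..t, F s) a b :=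
    hF.absolutelyContinuousOnInterval_intervalIntegral left_mem_uIcc
  have hZ0 : AbsolutelyContinuousOnInterval (fun _ : ℝ => Y0) a b :=
    (contDiff_const (n := 1)).contDiffOn.absolutelyContinuousOnInterval
  let Z : ℝ → ℝ := fun t => Y0 + ∫ s in a..t, F s
  have hZ : AbsolutelyContinuousOnInterval Z a b := hZ0.add hZ1
  have h := hZ.integral_deriv_mul_eq_sub hgAC
  rw [hY b (right_mem_Icc.2 hab), hY a (left_mem_Icc.2 hab)]
  refine Eq.trans ?_ h
  apply intervalIntegral.integral_congr_ae
  filter_upwards [hF.ae_hasDerivAt_integral] with x hx hxm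
  have hxm2 := uIoc_subset_uIcc hxm
  have hd : HasDerivAt Z (F x) x := (hx hxm2 a left_mem_uIcc).const_add Y0
  rw [hd.deriv, hdg, hY x (by rwa [uIcc_of_le hab] at hxm2)]

lemma hsp_ii (w : Hsp) : IntervalIntegrable (fun x => w x) volume 0 1 := by
  rw [intervalIntegrable_iff_integrableOn_Ioo_of_le zero_le_one]
  exact hsp_integrable w

lemma int01 (f : ℝ → ℝ) : ∫ x, f x ∂μ01 = ∫ x in (0:ℝ)..1, f x := by
  rw [intervalIntegral.integral_of_le zero_le_one, integral_Ioc_eq_integral_Ioo]; rfl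

/-- extension of the derivative -/
lemma dom_ext {w : Hsp} {g : ℝ → ℝ}
    (hg : ∀ x ∈ Ioo (0:ℝ) 1, ∀ y ∈ Ioo (0:ℝ) 1, g x - g y = ∫ z in y..x, w z) :
    ∃ G0 : ℝ, ∀ x ∈ Ioo (0:ℝ) 1, g x = G0 + ∫ z in (0:ℝ)..x, w z := by
  have hii := hsp_ii w
  have hsub : ∀ y ∈ Ioo (0:ℝ) 1, IntervalIntegrable (fun x => w x) volume 0 y := fun y hy =>
    hii.mono_set (by rw [uIcc_of_le hy.1.le, uIcc_of_le zero_le_one]; exact Icc_subset_Icc le_rfl hy.2.le)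
  have hh : (1/2:ℝ) ∈ Ioo (0:ℝ) 1 := by constructor <;> norm_num
  refine ⟨g (1/2) - ∫ z in (0:ℝ)..(1/2), w z, fun x hx => ?_⟩
  have h1 := hg x hx _ hh
  rw [← intervalIntegral.integral_interval_sub_left (hsub x hx) (hsub _ hh)] at h1
  linarith

lemma cn_dom (n : ℤ) (v w : Hsp) (h : InDomainA v w) : cn n w = -lam n * cn n v := by
  obtain ⟨vt, hc, h0, h1, hae, g, hd, hg⟩ := h
  obtain ⟨G0, hG⟩ := dom_ext hg
  let G : ℝ → ℝ := fun x => G0 + ∫ z in (0:ℝ)..x, w z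
  have hii := hsp_ii w
  have hGc : ContinuousOn G (Icc 0 1) := by
    apply continuousOn_const.add
    have := intervalIntegral.continuousOn_primitive_interval (a := 0) (b := 1) (μ := volume) (f := fun x => w x)
      (by rw [uIcc_of_le zero_le_one, integrableOn_Icc_iff_integrableOn_Ioo]; exact hsp_integrable w)
    rwa [uIcc_of_le zero_le_one] at this
  have hu : uIcc (0:ℝ) 1 = Icc 0 1 := uIcc_of_le zero_le_one
  let k : ℝ := n * Real.pi
  have hS : ∀ t, HasDerivAt (Sn n) (k * Real.cos (k * t)) t := by
    intro t
    have := ((hasDerivAt_id t).const_mul k).sin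
    simp only [id, mul_one] at this
    rw [mul_comm]; exact this
  have hC : ∀ t, HasDerivAt (fun t => k * Real.cos (k * t)) (-(lam n * Sn n t)) t := by
    intro t
    have := (((hasDerivAt_id t).const_mul k).cos).const_mul k
    simp only [id, mul_one] at this
    have e : -(lam n * Sn n t) = k * (-Real.sin (k * t) * k) := by
      unfold lam Sn; simp only [k]; ring
    rw [e]; exact this
  have I1 := ibp (fun x => w x) G (Sn n) (fun t => k * Real.cos (k * t)) G0 0 1 zero_le_one hii (fun t _ => rfl) hS (by fun_prop)
  have s0 : Sn n 0 = 0 := by simp [Sn]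
  have s1 : Sn n 1 = 0 := by simp [Sn, Real.sin_int_mul_pi]
  rw [s0, s1] at I1
  have i1 : IntervalIntegrable (fun t => w t * Sn n t) volume 0 1 := hii.mul_continuousOn (Sn_cont n).continuousOn
  have i2 : IntervalIntegrable (fun t => G t * (k * Real.cos (k*t))) volume 0 1 := by
    apply ContinuousOn.intervalIntegrable; rw [hu]
    exact hGc.mul (by fun_prop)
  rw [intervalIntegral.integral_add i1 i2] at I1
  have I2 := intervalIntegral.integral_mul_deriv_eq_deriv_mul_of_hasDerivAt (a := 0) (b := 1)
    (u := fun t => k * Real.cos (k * t)) (v := vt) (u' := fun t => -(lam n * Sn n t)) (v' := G)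
    (by fun_prop) (by rwa [hu]) (fun x _ => hC x)
    (fun x hx => by
      have hx : x ∈ Ioo (0:ℝ) 1 := by simpa using hx
      have := hd x hx
      rwa [hG x hx] at this)
    ((by have := Sn_cont n; fun_prop : Continuous fun t => -(lam n * Sn n t)).intervalIntegrable _ _)
    (by apply ContinuousOn.intervalIntegrable; rwa [hu])
  rw [h0, h1] at I2
  have e1 : cn n w = ∫ t in (0:ℝ)..1, w t * Sn n t := by
    rw [cn_eq, int01]; congr 1; ext x; ring
  have e2 : cn n v = ∫ t in (0:ℝ)..1, Sn n t * vt t := by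
    rw [cn_eq, ← int01]; apply integral_congr_ae
    filter_upwards [hae] with x hx; rw [hx]
  have e3 : ∫ t in (0:ℝ)..1, -(lam n * Sn n t) * vt t = - (lam n * cn n v) := by
    rw [e2, ← intervalIntegral.integral_const_mul, ← intervalIntegral.integral_neg]; congr 1; ext x; ring
  have e4 : ∫ t in (0:ℝ)..1, G t * (k * Real.cos (k*t)) = ∫ t in (0:ℝ)..1, (k * Real.cos (k*t)) * G t := by
    congr 1; ext x; ring
  rw [e3] at I2
  rw [e4, I2, ← e1] at I1
  linarith

lemma dom_zero (v w : Hsp) (h : InDomainA v w) (hv : ∀ᵐ x ∂μ01, 0 ≤ v x) :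
    ∀ᵐ x ∂μ01, v x = 0 → w x = 0 := by
  obtain ⟨vt, hc, -, -, hae, g, hd, hg⟩ := h
  obtain ⟨G0, hG⟩ := dom_ext hg
  have hvt : ∀ x ∈ Ioo (0:ℝ) 1, 0 ≤ vt x := by
    have hopen : IsOpen (Ioo (0:ℝ) 1 ∩ vt ⁻¹' (Iio 0)) :=
      (hc.mono Ioo_subset_Icc_self).isOpen_inter_preimage isOpen_Ioo isOpen_Iio
    have hnull : volume (Ioo (0:ℝ) 1 ∩ vt ⁻¹' (Iio 0)) = 0 := by
      have : ∀ᵐ x ∂μ01, 0 ≤ vt x := by filter_upwards [hae, hv] with x h1 h2; rwa [h1]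
      unfold μ01 at this
      rw [ae_restrict_iff' measurableSet_Ioo, ae_iff] at this
      refine measure_mono_null ?_ this
      intro x hx
      simp only [mem_ofPred_eq, Classical.not_imp, not_le]
      exact ⟨hx.1, hx.2⟩
    have hem := (hopen.measure_eq_zero_iff volume).1 hnull
    intro x hx
    by_contra hlt
    have : x ∈ Ioo (0:ℝ) 1 ∩ vt ⁻¹' (Iio 0) := ⟨hx, not_le.1 hlt⟩
    rw [hem] at this; exact this
  let S : Set ℝ := {x ∈ Ioo (0:ℝ) 1 | vt x = 0}
  let G : ℝ → ℝ := fun x => G0 + ∫ z in (0:ℝ)..x, w z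
  have hGS : ∀ x ∈ S, G x = 0 := by
    intro x hx
    have hmin : IsLocalMin vt x := by
      filter_upwards [isOpen_Ioo.mem_nhds hx.1] with y hy
      rw [hx.2]; exact hvt y hy
    have := hmin.hasDerivAt_eq_zero (hd x hx.1)
    rw [hG x hx.1] at this; exact this
  have hcount : volume { x ∈ S | nhdsWithin x (S ∩ Ioi x) = ⊥ } = 0 :=
    countable_setOfPred_isolated_right_within.measure_zero _
  have hcount2 : ∀ᵐ x ∂μ01, x ∉ { x ∈ S | nhdsWithin x (S ∩ Ioi x) = ⊥ } :=
    ae_restrict_of_ae (measure_eq_zero_iff_ae_notMem.1 hcount)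
  have hder : ∀ᵐ x ∂μ01, x ∈ uIcc (0:ℝ) 1 → ∀ c ∈ uIcc (0:ℝ) 1, HasDerivAt (fun x => ∫ t in c..x, w t) (w x) x :=
    ae_restrict_of_ae (hsp_ii w).ae_hasDerivAt_integral
  have hm : ∀ᵐ x ∂μ01, x ∈ Ioo (0:ℝ) 1 := ae_restrict_mem measurableSet_Ioo
  filter_upwards [hcount2, hder, hm, hae] with x h1 h2 h3 h4 hx0
  have hxS : x ∈ S := ⟨h3, by rw [h4, hx0]⟩
  have hne : nhdsWithin x (S ∩ Ioi x) ≠ ⊥ := fun hh => h1 ⟨hxS, hh⟩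
  have hdG : HasDerivAt G (w x) x :=
    (h2 (by rw [uIcc_of_le zero_le_one]; exact Ioo_subset_Icc_self h3) 0 left_mem_uIcc).const_add G0
  have hacc : UniqueDiffWithinAt ℝ S x := by
    rw [uniqueDiffWithinAt_iff_accPt, accPt_principal_iff_nhdsWithin]
    have : (nhdsWithin x (S ∩ Ioi x)).NeBot := ⟨hne⟩
    exact this.mono (nhdsWithin_mono x fun y hy => ⟨hy.1, ne_of_gt hy.2⟩)
  have hz : HasDerivWithinAt G 0 S x :=
    (hasDerivWithinAt_const x S (0:ℝ)).congr (fun y hy => hGS y hy) (hGS x hxS)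
  exact hacc.eq_deriv S hdG.hasDerivWithinAt hz

lemma deriv_nonneg_on_zero (u : ℝ → Hsp) (d : Hsp) (t : ℝ) (hd : HasDerivAt u d t)
    (hpos : ∀ s, t ≤ s → ∀ᵐ x ∂μ01, 0 ≤ u s x) :
    ∀ᵐ x ∂μ01, u t x = 0 → 0 ≤ d x := by
  let h : ℕ → ℝ := fun k => 1 / ((k:ℝ) + 1)
  have hh : ∀ k, 0 < h k := fun k => by positivity
  have hlim : Filter.Tendsto (fun k => (h k)⁻¹ • (u (t + h k) - u t)) Filter.atTop (nhds d) := by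
    have h1 := hd.tendsto_slope_zero
    apply h1.comp
    apply tendsto_nhdsWithin_iff.2 ⟨tendsto_one_div_add_atTop_nhds_zero_nat, Filter.Eventually.of_forall fun k => (hh k).ne'⟩
  have hmeas := tendstoInMeasure_of_tendsto_Lp hlim
  obtain ⟨ns, -, hns⟩ := hmeas.exists_seq_tendsto_ae
  have hall : ∀ᵐ x ∂μ01, ∀ k, 0 ≤ u (t + h k) x ∧ ((h k)⁻¹ • (u (t + h k) - u t) : Hsp) x = (h k)⁻¹ * (u (t + h k) x - u t x) := by
    rw [ae_all_iff]; intro k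
    filter_upwards [hpos (t + h k) (by linarith [hh k]), Lp.coeFn_smul (h k)⁻¹ (u (t + h k) - u t), Lp.coeFn_sub (u (t + h k)) (u t)] with x h1 h2 h3
    refine ⟨h1, ?_⟩
    rw [h2, Pi.smul_apply, h3, Pi.sub_apply, smul_eq_mul]
  filter_upwards [hns, hall] with x hx1 hx2 hx0
  apply ge_of_tendsto' hx1
  intro k
  rw [(hx2 (ns k)).2, hx0, sub_zero]
  exact mul_nonneg (inv_nonneg.2 (hh _).le) (hx2 _).1


lemma lam_nonneg (n : ℤ) : 0 ≤ lam n := by unfold lam; positivity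

lemma ker_term_bd (δ : ℝ) (x y : ℝ) (n : ℤ) :
    ‖Real.exp (-lam n * δ) * Sn n x * Sn n y‖ ≤ Real.exp (-lam n * δ) := by
  rw [norm_mul, norm_mul, Real.norm_eq_abs, Real.norm_eq_abs, Real.norm_eq_abs, abs_of_pos (Real.exp_pos _)]
  have h1 := Sn_abs n x
  have h2 := Sn_abs n y
  have h3 := Real.exp_pos (-lam n * δ)
  have h4 : |Sn n x| * |Sn n y| ≤ 1 := mul_le_one₀ h1 (abs_nonneg _) h2
  nlinarith

lemma Ker_cont (δ : ℝ) (hδ : 0 < δ) (x : ℝ) : Continuous (Ker δ x) := by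
  unfold Ker
  refine continuous_tsum (fun n => ?_) (summable_exp_lam δ hδ) (fun n y => ker_term_bd δ x y n)
  exact continuous_const.mul (Sn_cont n)

lemma Ker_bd (δ : ℝ) (hδ : 0 < δ) (x y : ℝ) : ‖Ker δ x y‖ ≤ ∑' n : ℤ, Real.exp (-lam n * δ) :=
  tsum_of_norm_bounded (summable_exp_lam δ hδ).hasSum (fun n => ker_term_bd δ x y n)

lemma Ker_int (δ : ℝ) (hδ : 0 < δ) (x : ℝ) (v : Hsp) : Integrable (fun y => Ker δ x y * v y) μ01 :=
  (hsp_integrable v).bdd_mul (Ker_cont δ hδ x).aestronglyMeasurable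
    (Filter.Eventually.of_forall fun y => Ker_bd δ hδ x y)

lemma Ker_hasSum (δ : ℝ) (hδ : 0 < δ) (x : ℝ) (v : Hsp) :
    HasSum (fun n : ℤ => Real.exp (-lam n * δ) * Sn n x * cn n v) (∫ y, Ker δ x y * v y ∂μ01) := by
  have hi : ∀ n : ℤ, Integrable (fun y => Real.exp (-lam n * δ) * Sn n x * Sn n y * v y) μ01 := fun n =>
    (hsp_integrable v).bdd_mul (continuous_const.mul (Sn_cont n)).aestronglyMeasurable
      (Filter.Eventually.of_forall fun y => ker_term_bd δ x y n)
  have h := hasSum_integral_of_summable_integral_norm (μ := μ01)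
    (F := fun (n : ℤ) y => Real.exp (-lam n * δ) * Sn n x * Sn n y * v y) hi
    (by
      refine Summable.of_nonneg_of_le (fun n => integral_nonneg fun y => norm_nonneg _) (fun n => ?_)
        ((summable_exp_lam δ hδ).mul_right (∫ y, ‖v y‖ ∂μ01))
      rw [← integral_const_mul]
      refine integral_mono (hi n).norm ((hsp_integrable v).norm.const_mul _) fun y => ?_
      show ‖_ * v y‖ ≤ _
      rw [norm_mul]
      exact mul_le_mul_of_nonneg_right (ker_term_bd δ x y n) (norm_nonneg _))
  have e1 : (fun n : ℤ => Real.exp (-lam n * δ) * Sn n x * cn n v) =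
      fun n : ℤ => ∫ y, Real.exp (-lam n * δ) * Sn n x * Sn n y * v y ∂μ01 := by
    funext n
    rw [cn_eq, ← integral_const_mul]
    congr 1; funext y; ring
  have e2 : ∫ y, Ker δ x y * v y ∂μ01 =
      ∫ y, ∑' n : ℤ, Real.exp (-lam n * δ) * Sn n x * Sn n y * v y ∂μ01 := by
    congr 1; funext y
    rw [tsum_mul_right]; rfl
  rw [e1, e2]; exact h

lemma mem01 : ∀ᵐ x ∂μ01, x ∈ Ioo (0:ℝ) 1 := ae_restrict_mem measurableSet_Ioo

lemma Ker_nonneg (δ : ℝ) (hδ : 0 < δ) (x : ℝ) (hx : x ∈ Ioo (0:ℝ) 1) (v : Hsp)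
    (hv : ∀ᵐ x ∂μ01, 0 ≤ v x) : 0 ≤ ∫ y, Ker δ x y * v y ∂μ01 := by
  apply integral_nonneg_of_ae
  filter_upwards [hv, mem01] with y h1 h2
  exact mul_nonneg (Ker_pos δ x y hδ hx h2).le h1

lemma Ker_pos' (δ : ℝ) (hδ : 0 < δ) (x : ℝ) (hx : x ∈ Ioo (0:ℝ) 1) (v : Hsp)
    (hv : ∀ᵐ x ∂μ01, 0 ≤ v x) (hne : v ≠ 0) : 0 < ∫ y, Ker δ x y * v y ∂μ01 := by
  refine lt_of_le_of_ne (Ker_nonneg δ hδ x hx v hv) fun h0 => hne ?_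
  have := (integral_eq_zero_iff_of_nonneg_ae (by
    filter_upwards [hv, mem01] with y h1 h2
    exact mul_nonneg (Ker_pos δ x y hδ hx h2).le h1) (Ker_int δ hδ x v)).1 h0.symm
  apply (Lp.eq_zero_iff_ae_eq_zero).2
  filter_upwards [this, mem01] with y h1 h2
  have := Ker_pos δ x y hδ hx h2
  simpa [this.ne'] using h1

/-- time derivative a.e. -/
lemma sol_hasDerivAt {b ω : ℝ → ℝ} {τ : ℝ} {u r u' uxx : ℝ → Hsp}
    (h : IsStrongSolutionWith b ω τ u r u' uxx) (s t : ℝ) (hs : τ < s) (hst : s < t) :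
    ∀ᵐ σ ∂(volume.restrict (Ioc s t)), HasDerivAt u (u' σ) σ := by
  obtain ⟨hi, hf⟩ := h.fund s t hs hst
  have h0 : ∀ᵐ σ : ℝ ∂volume, σ ≠ t := by
    simp [ae_iff]
  filter_upwards [ae_restrict_mem measurableSet_Ioc, ae_restrict_of_ae hi.ae_hasDerivAt_integral, ae_restrict_of_ae h0] with σ h1 h2 h3
  have h4 := (h2 (by rw [uIcc_of_le hst.le]; exact Ioc_subset_Icc_self h1) s left_mem_uIcc).const_add (u s)
  refine h4.congr_of_eventuallyEq ?_
  filter_upwards [Icc_mem_nhds h1.1 (lt_of_le_of_ne h1.2 h3)] with y hy using hf y hy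

lemma hv_cases {s h : ℝ} (hh : h ∈ heaviside s) : |h| ≤ 1 ∧ (0 < s → h = 1) := by
  unfold heaviside at hh
  split_ifs at hh with h1 h2
  · rw [mem_singleton_iff] at hh; subst hh; exact ⟨by simp, fun h => absurd h1 (by linarith)⟩
  · exact ⟨abs_le.2 hh, fun h => absurd h2 h.ne'⟩
  · rw [mem_singleton_iff] at hh; subst hh; simp

lemma ae_Ioc {P : ℝ → Prop} {τ s t : ℝ} (hs : τ ≤ s) (h : ∀ᵐ σ ∂(volume.restrict (Ioi τ)), P σ) :
    ∀ᵐ σ ∂(volume.restrict (Ioc s t)), P σ :=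
  ae_restrict_of_ae_restrict_of_subset (fun x hx => lt_of_le_of_lt hs hx.1) h

lemma r_nonneg {b ω : ℝ → ℝ} {b0 b1 ω0 ω1 τ : ℝ} (hC : Cond1 b ω b0 b1 ω0 ω1) {u r u' uxx : ℝ → Hsp}
    (h : IsStrongSolutionWith b ω τ u r u' uxx) (hn : NonnegOn u τ) (s t : ℝ) (hs : τ < s) (hst : s < t) :
    ∀ᵐ σ ∂(volume.restrict (Ioc s t)), ∀ᵐ x ∂μ01, 0 ≤ r σ x := by
  filter_upwards [sol_hasDerivAt h s t hs hst, ae_Ioc hs.le h.sel, ae_Ioc hs.le h.dom, ae_Ioc hs.le h.eq,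
    ae_restrict_mem measurableSet_Ioc] with σ h1 h2 h3 h4 h5
  have hσ : τ ≤ σ := (hs.trans h5.1).le
  have e := Lp.coeFn_add (r σ) (uxx σ)
  rw [← h4] at e
  filter_upwards [deriv_nonneg_on_zero u _ σ h1 (fun s' hs' => hn s' (hσ.trans hs')), dom_zero _ _ h3 (hn σ hσ),
    h2, hn σ hσ, e] with x k1 k2 k3 k4 k5
  rcases k4.eq_or_lt with k | k
  · have a := k1 k.symm
    rw [k5, Pi.add_apply, k2 k.symm, add_zero] at a
    exact a
  · obtain ⟨hh, hm, hr⟩ := k3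
    rw [hr, (hv_cases hm).2 k]
    have := hC.blb σ
    have := hC.b0pos
    have := hC.ωlb σ
    have := hC.ω0nonneg
    have : 0 ≤ ω σ * u σ x := mul_nonneg (by linarith) k4
    linarith

lemma r_bd {b ω : ℝ → ℝ} {b0 b1 ω0 ω1 τ : ℝ} (hC : Cond1 b ω b0 b1 ω0 ω1) {u r u' uxx : ℝ → Hsp}
    (h : IsStrongSolutionWith b ω τ u r u' uxx) (s t : ℝ) (hs : τ < s) :
    ∃ C : ℝ, 0 ≤ C ∧ ∀ᵐ σ ∂(volume.restrict (Ioc s t)), ‖r σ‖ ≤ C := by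
  obtain ⟨M, hM⟩ := isCompact_Icc.exists_bound_of_continuousOn
    (h.cont.mono (fun x (hx : x ∈ Icc s t) => (hs.le.trans hx.1 : τ ≤ x)))
  have hb1 : 0 < b1 := hC.b0pos.trans_le ((hC.blb 0).trans (hC.bub 0))
  have hω1 : 0 ≤ ω1 := hC.ω0nonneg.trans ((hC.ωlb 0).trans (hC.ωub 0))
  refine ⟨b1 + ω1 * |M|, by positivity, ?_⟩
  filter_upwards [ae_Ioc hs.le h.sel, ae_restrict_mem measurableSet_Ioc] with σ h2 h5
  let c : Hsp := MemLp.toLp (fun _ : ℝ => b1) (memLp_const b1)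
  have hc : ‖c‖ ≤ b1 := by
    rw [Lp.norm_toLp, eLpNorm_const _ (by norm_num) (by exact (IsProbabilityMeasure.ne_zero μ01))]
    simp [abs_of_pos hb1]
  have key : ‖r σ‖ ≤ ‖c + ω1 • |u σ|‖ := by
    apply Lp.norm_le_norm_of_ae_le
    filter_upwards [h2, Lp.coeFn_add c (ω1 • |u σ|), Lp.coeFn_smul ω1 |u σ|, Lp.coeFn_abs (u σ),
      (memLp_const b1 : MemLp (fun _ : ℝ => b1) 2 μ01).coeFn_toLp] with x k1 k2 k3 k4 k5
    obtain ⟨hh, hm, hr⟩ := k1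
    rw [k2, Pi.add_apply, k3, Pi.smul_apply, k4, hr]
    have k5' : c x = b1 := k5
    rw [k5', Real.norm_eq_abs, Real.norm_eq_abs, smul_eq_mul]
    have a1 : |b σ * hh| ≤ b1 := by
      rw [abs_mul, abs_of_pos (hC.b0pos.trans_le (hC.blb σ))]
      have := (hv_cases hm).1
      have := hC.bub σ
      have := abs_nonneg hh
      have := (hC.b0pos.trans_le (hC.blb σ))
      nlinarith
    have a2 : |ω σ * u σ x| ≤ ω1 * |u σ x| := by
      rw [abs_mul, abs_of_nonneg (hC.ω0nonneg.trans (hC.ωlb σ))]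
      exact mul_le_mul_of_nonneg_right (hC.ωub σ) (abs_nonneg _)
    exact (abs_add_le _ _).trans ((add_le_add a1 a2).trans (le_abs_self _))
  refine key.trans ((norm_add_le _ _).trans (add_le_add hc ?_))
  rw [norm_smul, Real.norm_eq_abs, abs_of_nonneg hω1, norm_abs_eq_norm]
  exact mul_le_mul_of_nonneg_left ((hM σ (Ioc_subset_Icc_self h5)).trans (le_abs_self M)) hω1


lemma sol_cn {b ω : ℝ → ℝ} {τ : ℝ} {u r u' uxx : ℝ → Hsp}
    (h : IsStrongSolutionWith b ω τ u r u' uxx) (n : ℤ) (s t : ℝ) (hs : τ < s) (hst : s < t) :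
    IntervalIntegrable (fun σ => cn n (u' σ)) volume s t ∧
    (∀ σ ∈ Icc s t, cn n (u σ) = cn n (u s) + ∫ z in s..σ, cn n (u' z)) ∧
    ∀ᵐ σ ∂(volume.restrict (Ioc s t)), cn n (u' σ) = cn n (r σ) - lam n * cn n (u σ) := by
  obtain ⟨hi, hf⟩ := h.fund s t hs hst
  refine ⟨⟨(cn n).integrable_comp hi.1, (cn n).integrable_comp hi.2⟩, fun σ hσ => ?_, ?_⟩
  · rw [hf σ hσ, map_add, ContinuousLinearMap.intervalIntegral_comp_comm]
    exact hi.mono_set (by rw [uIcc_of_le hσ.1, uIcc_of_le hst.le]; exact Icc_subset_Icc le_rfl hσ.2)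
  · filter_upwards [ae_Ioc hs.le h.dom, ae_Ioc hs.le h.eq] with σ h3 h4
    rw [h4, map_add, cn_dom n _ _ h3]; ring

lemma duhamel {b ω : ℝ → ℝ} {τ : ℝ} {u r u' uxx : ℝ → Hsp}
    (h : IsStrongSolutionWith b ω τ u r u' uxx) (n : ℤ) (s t : ℝ) (hs : τ < s) (hst : s < t) :
    cn n (u t) = Real.exp (-lam n * (t - s)) * cn n (u s) +
      ∫ σ in Ioc s t, Real.exp (-lam n * (t - σ)) * cn n (r σ) := by
  obtain ⟨h1, h2, h3⟩ := sol_cn h n s t hs hst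
  have hg : ∀ σ, HasDerivAt (fun σ => Real.exp (-lam n * (t - σ))) (lam n * Real.exp (-lam n * (t - σ))) σ := by
    intro σ
    have h0 : HasDerivAt (fun σ => -lam n * (t - σ)) (-lam n * (-1)) σ :=
      ((hasDerivAt_id σ).const_sub t).const_mul (-lam n)
    have := h0.exp
    rw [show Real.exp (-lam n * (t - σ)) * (-lam n * -1) = lam n * Real.exp (-lam n * (t - σ)) by ring] at this
    exact this
  have I := ibp _ (fun σ => cn n (u σ)) _ _ _ s t hst.le h1 h2 hg (by fun_prop)
  rw [intervalIntegral.integral_of_le hst.le] at I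
  simp only [sub_self, mul_zero, Real.exp_zero, mul_one] at I
  rw [show cn n (u t) = (cn n (u t) - cn n (u s) * Real.exp (-lam n * (t - s))) + Real.exp (-lam n * (t - s)) * cn n (u s) by ring,
    ← I, add_comm]
  congr 1
  apply integral_congr_ae
  filter_upwards [h3] with σ hσ
  rw [hσ]; ring

lemma lam_ne {n : ℤ} (hn : n ≠ 0) : 0 < lam n := by
  unfold lam
  have : (n:ℝ) ≠ 0 := by exact_mod_cast hn
  have := Real.pi_ne_zero
  positivity

lemma cn_zero (v : Hsp) : cn 0 v = 0 := by
  rw [cn_eq]; simp [Sn]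

lemma summable_inv_lam : Summable fun n : ℤ => (lam n)⁻¹ := by
  have h : Summable fun n : ℤ => 1 / (n:ℝ) ^ 2 := Real.summable_one_div_int_pow.2 (by norm_num)
  refine (h.mul_left (Real.pi ^ 2)⁻¹).congr fun n => ?_
  unfold lam; rw [mul_pow, mul_inv]; ring

lemma exp_int (l s t : ℝ) (hl : 0 < l) (hst : s ≤ t) :
    ∫ σ in Ioc s t, Real.exp (-l * (t - σ)) ≤ l⁻¹ := by
  rw [← intervalIntegral.integral_of_le hst]
  have hg : ∀ σ ∈ uIcc s t, HasDerivAt (fun σ => l⁻¹ * Real.exp (-l * (t - σ))) (Real.exp (-l * (t - σ))) σ := by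
    intro σ _
    have h0 : HasDerivAt (fun σ => -l * (t - σ)) (-l * (-1)) σ :=
      ((hasDerivAt_id σ).const_sub t).const_mul (-l)
    have := h0.exp.const_mul l⁻¹
    rw [show l⁻¹ * (Real.exp (-l * (t - σ)) * (-l * -1)) = Real.exp (-l * (t - σ)) by field_simp] at this
    exact this
  rw [intervalIntegral.integral_eq_sub_of_hasDerivAt hg ((by fun_prop : Continuous fun σ => Real.exp (-l * (t - σ))).intervalIntegrable _ _)]
  simp only [sub_self, mul_zero, Real.exp_zero, mul_one]
  have : 0 < l⁻¹ * Real.exp (-l * (t - s)) := by positivity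
  linarith

/-- positivity -/
lemma positivity_main {b ω : ℝ → ℝ} {b0 b1 ω0 ω1 τ : ℝ} (hC : Cond1 b ω b0 b1 ω0 ω1) {u r u' uxx : ℝ → Hsp}
    (h : IsStrongSolutionWith b ω τ u r u' uxx) (hn : NonnegOn u τ) (s t : ℝ) (hs : τ < s) (hst : s < t)
    (hne : u s ≠ 0) : IsPositive (u t) := by
  obtain ⟨C, hC0, hCb⟩ := r_bd hC h s t hs
  have hpos := r_nonneg hC h hn s t hs hst
  have hδ : 0 < t - s := sub_pos.2 hst
  -- integrability of r
  have hri : IntegrableOn r (Ioc s t) := by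
    have h1 : MemLp r 2 (volume.restrict (Ioc s t)) :=
      (h.rmem (t+1) (by linarith)).mono_measure (Measure.restrict_mono (fun x (hx : x ∈ Ioc s t) => (⟨hs.trans hx.1, by linarith [hx.2]⟩ : x ∈ Ioo τ (t+1))) le_rfl)
    exact h1.integrable (by norm_num)
  have hqi : ∀ n : ℤ, IntegrableOn (fun σ => cn n (r σ)) (Ioc s t) := fun n => (cn n).integrable_comp hri
  have hei : ∀ n : ℤ, Integrable (fun σ => Real.exp (-lam n * (t - σ))) (volume.restrict (Ioc s t)) := fun n =>
    ((by fun_prop : Continuous fun σ => Real.exp (-lam n * (t - σ))).integrableOn_Ioc)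
  have hbd : ∀ (n : ℤ) (c : ℝ), |c| ≤ 1 → ∀ᵐ σ ∂(volume.restrict (Ioc s t)),
      ‖Real.exp (-lam n * (t - σ)) * c * cn n (r σ)‖ ≤ Real.exp (-lam n * (t - σ)) * C := by
    intro n c hc
    filter_upwards [hCb] with σ hσ
    rw [norm_mul, norm_mul, Real.norm_eq_abs, Real.norm_eq_abs, Real.norm_eq_abs, Real.abs_exp]
    have h1 : |cn n (r σ)| ≤ C := (cn_abs n (r σ)).trans hσ
    have h2 := Real.exp_pos (-lam n * (t - σ))
    have h3 : Real.exp (-lam n * (t - σ)) * |c| ≤ Real.exp (-lam n * (t - σ)) := mul_le_of_le_one_right h2.le hc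
    exact mul_le_mul h3 h1 (abs_nonneg _) h2.le
  have hint : ∀ (n : ℤ) (c : ℝ), |c| ≤ 1 → Integrable (fun σ => Real.exp (-lam n * (t - σ)) * c * cn n (r σ)) (volume.restrict (Ioc s t)) := by
    intro n c hc
    refine Integrable.mono' ((hei n).mul_const C) ?_ (hbd n c hc)
    exact ((hei n).mul_const c).aestronglyMeasurable.mul (hqi n).aestronglyMeasurable
  have hnorm : ∀ (n : ℤ) (c : ℝ), |c| ≤ 1 → ∫ σ in Ioc s t, ‖Real.exp (-lam n * (t - σ)) * c * cn n (r σ)‖ ≤ (lam n)⁻¹ * C := by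
    intro n c hc
    by_cases hn0 : n = 0
    · subst hn0
      simp [cn_zero, lam]
    · refine (integral_mono_ae (hint n c hc).norm ((hei n).mul_const C) (hbd n c hc)).trans ?_
      rw [integral_mul_const]
      exact mul_le_mul_of_nonneg_right (exp_int _ s t (lam_ne hn0) hst.le) hC0
  have hsum2 : Summable fun n : ℤ => (lam n)⁻¹ * C := summable_inv_lam.mul_right C
  have hsum : Summable fun n : ℤ => |cn n (u t)| := by
    refine Summable.of_nonneg_of_le (fun n => abs_nonneg _) (fun n => ?_)
      (((summable_exp_lam (t - s) hδ).mul_right ‖u s‖).add hsum2)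
    rw [duhamel h n s t hs hst]
    refine (abs_add_le _ _).trans (add_le_add ?_ ?_)
    · rw [abs_mul, Real.abs_exp]
      exact mul_le_mul_of_nonneg_left (cn_abs n _) (Real.exp_pos _).le
    · refine le_trans ?_ (hnorm n 1 (by simp))
      simp only [mul_one]
      exact abs_integral_le_integral_abs
  obtain ⟨hcont, hae⟩ := sine_series (u t) hsum
  refine ⟨_, hcont.continuousOn, hae, fun x hx => ?_⟩
  have k1 := Ker_hasSum (t - s) hδ x (u s)
  have k2 := hasSum_integral_of_summable_integral_norm (μ := volume.restrict (Ioc s t))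
    (F := fun (n : ℤ) σ => Real.exp (-lam n * (t - σ)) * Sn n x * cn n (r σ)) (fun n => hint n _ (Sn_abs n x))
    (Summable.of_nonneg_of_le (fun n => integral_nonneg fun y => norm_nonneg _) (fun n => hnorm n _ (Sn_abs n x)) hsum2)
  have k3 := k1.add k2
  have e : (fun n : ℤ => Real.exp (-lam n * (t - s)) * Sn n x * cn n (u s) +
      ∫ σ in Ioc s t, Real.exp (-lam n * (t - σ)) * Sn n x * cn n (r σ)) = fun n => cn n (u t) * Sn n x := by
    funext n
    rw [duhamel h n s t hs hst, add_mul, ← integral_mul_const]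
    congr 1
    · ring
    · congr 1; funext σ; ring
  rw [e] at k3
  show 0 < ∑' n : ℤ, cn n (u t) * Sn n x
  rw [k3.tsum_eq]
  refine add_pos_of_pos_of_nonneg (Ker_pos' _ hδ x hx _ (hn s hs.le) hne) ?_
  apply integral_nonneg_of_ae
  have h0 : ∀ᵐ σ : ℝ ∂volume, σ ≠ t := by
    simp [ae_iff]
  filter_upwards [hpos, ae_restrict_mem measurableSet_Ioc, ae_restrict_of_ae h0] with σ h1 h2 h3
  have hd : 0 < t - σ := sub_pos.2 (lt_of_le_of_ne h2.2 h3)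
  show 0 ≤ ∑' n : ℤ, Real.exp (-lam n * (t - σ)) * Sn n x * cn n (r σ)
  rw [(Ker_hasSum (t - σ) hd x (r σ)).tsum_eq]
  exact Ker_nonneg _ hd x hx _ h1

lemma pos_all {b ω : ℝ → ℝ} {b0 b1 ω0 ω1 τ : ℝ} (hC : Cond1 b ω b0 b1 ω0 ω1) {u r u' uxx : ℝ → Hsp}
    (h : IsStrongSolutionWith b ω τ u r u' uxx) (hn : NonnegOn u τ) (hne : u τ ≠ 0) (t : ℝ) (ht : τ < t) :
    IsPositive (u t) := by
  have hc : ContinuousWithinAt u (Ioi τ) τ := (h.cont τ self_mem_Ici).mono Ioi_subset_Ici_self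
  have h1 : ∀ᶠ s in nhdsWithin τ (Ioi τ), u s ≠ 0 := hc.eventually_ne hne
  have h2 : ∀ᶠ s in nhdsWithin τ (Ioi τ), s ∈ Ioo τ t := Ioo_mem_nhdsGT ht
  obtain ⟨s, h3, h4⟩ := (h1.and h2).exists
  exact positivity_main hC h hn s t h4.1 h4.2 h3

lemma pos_ae {v : Hsp} (h : IsPositive v) : ∀ᵐ x ∂μ01, 0 < v x := by
  obtain ⟨vt, -, h1, h2⟩ := h
  filter_upwards [h1, mem01] with x h3 h4
  rw [← h3]; exact h2 x h4

lemma uniq {b ω : ℝ → ℝ} {b0 b1 ω0 ω1 τ : ℝ} (hC : Cond1 b ω b0 b1 ω0 ω1)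
    {u r u' uxx w q w' wxx : ℝ → Hsp}
    (h : IsStrongSolutionWith b ω τ u r u' uxx) (hn : NonnegOn u τ) (hne : u τ ≠ 0)
    (k : IsStrongSolutionWith b ω τ w q w' wxx) (kn : NonnegOn w τ) (heq : w τ = u τ) (t : ℝ) (ht : τ < t) :
    w t = u t := by
  rw [← sub_eq_zero]
  apply complete_sin
  intro n
  have hdiff : ∀ s, τ < s → ∀ᵐ σ ∂(volume.restrict (Ioc s t)), q σ - r σ = ω σ • (w σ - u σ) := by
    intro s hs
    filter_upwards [ae_Ioc hs.le h.sel, ae_Ioc hs.le k.sel, ae_restrict_mem measurableSet_Ioc] with σ h1 h2 h3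
    have hσ := hs.trans h3.1
    apply Lp.ext
    filter_upwards [h1, h2, pos_ae (pos_all hC h hn hne σ hσ), pos_ae (pos_all hC k kn (heq ▸ hne) σ hσ),
      Lp.coeFn_sub (q σ) (r σ), Lp.coeFn_smul (ω σ) (w σ - u σ), Lp.coeFn_sub (w σ) (u σ)] with x a1 a2 a3 a4 a5 a6 a7
    obtain ⟨p1, m1, e1⟩ := a1
    obtain ⟨p2, m2, e2⟩ := a2
    rw [a5, a6, Pi.sub_apply, Pi.smul_apply, a7, Pi.sub_apply, e1, e2, (hv_cases m1).2 a3, (hv_cases m2).2 a4, smul_eq_mul]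
    ring
  let Φ : ℝ → ℝ := fun t => ∫ z in τ..t, (lam n - ω z)
  have hωc := hC.contω
  have hΦ : ∀ σ, HasDerivAt Φ (lam n - ω σ) σ := fun σ =>
    (by fun_prop : Continuous fun z => lam n - ω z).integral_hasStrictDerivAt τ σ |>.hasDerivAt
  have hΦc : Continuous Φ := continuous_iff_continuousAt.2 fun σ => (hΦ σ).continuousAt
  let y : ℝ → ℝ := fun σ => cn n (w σ - u σ)
  have hconst : ∀ s ∈ Ioo τ t, y s * Real.exp (Φ s) = y t * Real.exp (Φ t) := by
    intro s hs
    obtain ⟨h1, h2, h3⟩ := sol_cn h n s t hs.1 hs.2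
    obtain ⟨k1, k2, k3⟩ := sol_cn k n s t hs.1 hs.2
    have I := ibp (fun σ => cn n (w' σ) - cn n (u' σ)) y (fun σ => Real.exp (Φ σ)) (fun σ => Real.exp (Φ σ) * (lam n - ω σ))
      (y s) s t hs.2.le (k1.sub h1) (fun σ hσ => by
        have hsub : uIcc s σ ⊆ uIcc s t := by
          rw [uIcc_of_le hσ.1, uIcc_of_le hs.2.le]; exact Icc_subset_Icc le_rfl hσ.2
        rw [intervalIntegral.integral_sub (k1.mono_set hsub) (h1.mono_set hsub)]
        simp only [y, map_sub]
        rw [h2 σ hσ, k2 σ hσ]; ring) (fun σ => (hΦ σ).exp) (by fun_prop)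
    have z : ∫ σ in s..t, ((cn n (w' σ) - cn n (u' σ)) * Real.exp (Φ σ) + y σ * (Real.exp (Φ σ) * (lam n - ω σ))) = 0 := by
      rw [intervalIntegral.integral_of_le hs.2.le]
      apply integral_eq_zero_of_ae
      filter_upwards [h3, k3, hdiff s hs.1] with σ e1 e2 e3
      have e4 : cn n (q σ) - cn n (r σ) = ω σ * y σ := by
        rw [← map_sub, e3, map_smul, smul_eq_mul]
      simp only [Pi.zero_apply]
      rw [e1, e2, show cn n (q σ) = cn n (r σ) + ω σ * y σ by linarith]
      simp only [y, map_sub]; ring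
    rw [z] at I
    linarith
  have hyc : ContinuousWithinAt (fun s => y s * Real.exp (Φ s)) (Ioi τ) τ := by
    have c1 : ContinuousWithinAt y (Ioi τ) τ :=
      (cn n).continuous.continuousAt.comp_continuousWithinAt
        (((k.cont τ self_mem_Ici).sub (h.cont τ self_mem_Ici)).mono Ioi_subset_Ici_self)
    exact c1.mul (Real.continuous_exp.comp hΦc).continuousWithinAt
  have hlim : Filter.Tendsto (fun s => y s * Real.exp (Φ s)) (nhdsWithin τ (Ioi τ)) (nhds (y t * Real.exp (Φ t))) := by
    apply tendsto_const_nhds.congr'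
    filter_upwards [Ioo_mem_nhdsGT ht] with s hs using (hconst s hs).symm
  have hy0 : y τ = 0 := by simp [y, heq]
  have hfin : y t * Real.exp (Φ t) = y τ * Real.exp (Φ τ) := tendsto_nhds_unique hlim hyc
  rw [hy0, zero_mul] at hfin
  exact (mul_eq_zero.1 hfin).resolve_right (Real.exp_pos _).ne'

theorem statement1
    (b ω : ℝ → ℝ) (b0 b1 ω0 ω1 τ : ℝ) (hC : Cond1 b ω b0 b1 ω0 ω1)
    (uτ : Hsp) (huτ0 : ∀ᵐ x ∂μ01, 0 ≤ uτ x) (huτne : uτ ≠ 0)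
    (u : ℝ → Hsp)
    (hsol : IsStrongSolution b ω τ u) (hinit : u τ = uτ) (hnneg : NonnegOn u τ) :
    (∀ w : ℝ → Hsp, IsStrongSolution b ω τ w → w τ = uτ → NonnegOn w τ →
      ∀ t, τ ≤ t → w t = u t) ∧
    ∀ t, τ < t → IsPositive (u t) := by
  obtain ⟨r, u', uxx, h⟩ := hsol
  have hne : u τ ≠ 0 := hinit ▸ huτne
  refine ⟨fun w hw hw0 hwn t ht => ?_, fun t ht => pos_all hC h hnneg hne t ht⟩
  obtain ⟨q, w', wxx, k⟩ := hw
  rcases ht.eq_or_lt with rfl | ht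
  · rw [hw0, hinit]
  · exact uniq hC h hnneg hne k hwn (by rw [hw0, hinit]) t ht



end
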